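/- With the exact-3-hitting-set construction of ρ, π_1, π_2 as described, the following are equivalent: (1) there exist natural numbers x_1, x_2 such that π_1^{x_1} π_2^{x_2} has the same cycle type as ρ; (2) there exists a subset T ⊆ [n] such that |T ∩ C_j| = 1 for all j ∈ [m]. -/

import Mathlib

/-! Exact-3-hitting-set construction.  The ground set is `Fin n`; the `j`-th clause is
`{idx j 0, idx j 1, idx j 2}` with `idx j` strictly monotone.  `p i` is the `(i+1)`-st prime
greater than `3` (zero-indexed, so `p 0 = 5`), `q n j` is the `(j+1)`-st of the `m` primes
following the first `2n` primes greater than `3`.  Every permutation group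
`Sym(ℓ)`-component is realized on `Fin ℓ`, and the `ℓ`-cycle `([ℓ]) = (1,2,…,ℓ)` is realized
as `finRotate ℓ`.  Cycle types are computed in the symmetric group on the disjoint union of
all components (fixpoints are discarded by `Equiv.Perm.cycleType`, so the padding of the
second block of components to degree `p_n^3 q_j` is immaterial). -/

namespace HittingSet

/-- `p i` is the `(i+1)`-st prime greater than 3 (zero-indexed): `p 0 = 5`. -/
noncomputable def p (i : ℕ) : ℕ := Nat.nth Nat.Prime (i + 2)

/-- `q n j` is the `(j+1)`-st prime following the first `2n` primes greater than 3. -/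
noncomputable def q (n j : ℕ) : ℕ := Nat.nth Nat.Prime (2 * n + 2 + j)

/-- `r j = q_j ⬝ p_{i_1} p_{i_2} p_{i_3}` for the clause `C_j = {i_1 < i_2 < i_3}`. -/
noncomputable def r (n : ℕ) {m : ℕ} (idx : Fin m → Fin 3 → Fin n) (j : Fin m) : ℕ :=
  q n j * (p (idx j 0) * p (idx j 1) * p (idx j 2))

/-- The underlying set of the permutation group
`G = ∏_{i=1}^n Sym(p_i p_{n+i}) × ∏_{j=1}^m Sym(r_j)^6` (embedded in a symmetric group). -/
abbrev Omega (n : ℕ) {m : ℕ} (idx : Fin m → Fin 3 → Fin n) : Type :=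
  (Σ i : Fin n, Fin (p i * p (n + i))) ⊕ (Σ j : Fin m, Σ _d : Fin 6, Fin (r n idx j))

/-- `ρ = (ζ_1,…,ζ_n,η_1,…,η_m)` with `ζ_i = ([p_i p_{n+i}])` and
`η_j = (([r_j])^{p_{i_1}p_{i_2}p_{i_3}}, ([r_j])^{p_{i_1}}, ([r_j])^{p_{i_2}},
([r_j])^{p_{i_3}}, ([r_j]), ([r_j]))`. -/
noncomputable def rho (n : ℕ) {m : ℕ} (idx : Fin m → Fin 3 → Fin n) : Equiv.Perm (Omega n idx) :=
  Equiv.sumCongr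
    (Equiv.sigmaCongrRight fun _i => finRotate _)
    (Equiv.sigmaCongrRight fun j => Equiv.sigmaCongrRight fun d =>
      finRotate (r n idx j) ^
        (![p (idx j 0) * p (idx j 1) * p (idx j 2),
           p (idx j 0), p (idx j 1), p (idx j 2), 1, 1] d))

/-- `π_1 = (α_1,…,α_n,β_1,…,β_m)` with `α_i = ([p_i p_{n+i}])` and
`β_j = (([r_j])^{s_{j,1}}, …, ([r_j])^{s_{j,6}})`. -/
noncomputable def pi1 (n : ℕ) {m : ℕ} (idx : Fin m → Fin 3 → Fin n) (s : Fin m → ℕ → ℕ) :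
    Equiv.Perm (Omega n idx) :=
  Equiv.sumCongr
    (Equiv.sigmaCongrRight fun _i => finRotate _)
    (Equiv.sigmaCongrRight fun j => Equiv.sigmaCongrRight fun d =>
      finRotate (r n idx j) ^ s j d.val)

/-- `π_2 = (γ_1,…,γ_n,δ_1,…,δ_m)` with `γ_i = id` and
`δ_j = (([r_j])^{t_j}, …, ([r_j])^{t_j})`. -/
noncomputable def pi2 (n : ℕ) {m : ℕ} (idx : Fin m → Fin 3 → Fin n) (t : Fin m → ℕ) :
    Equiv.Perm (Omega n idx) :=
  Equiv.sumCongr (Equiv.refl _)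
    (Equiv.sigmaCongrRight fun j => Equiv.sigmaCongrRight fun _d =>
      finRotate (r n idx j) ^ t j)

section aux
open Equiv Equiv.Perm

theorem ct_of_inj {α β : Type*} [Fintype α] [DecidableEq α] [Fintype β] [DecidableEq β]
    (f : Perm α) (g : Perm β) (e : α → β) (he : Function.Injective e)
    (h1 : ∀ a, g (e a) = e (f a)) (h2 : ∀ b, b ∉ Set.range e → g b = b) :
    g.cycleType = f.cycleType := by
  classical
  rw [← cycleType_extendDomain (Equiv.ofInjective e he) (g := f)]
  congr 1
  ext b
  by_cases hb : b ∈ Set.range e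
  · obtain ⟨a, rfl⟩ := hb
    have := extendDomain_apply_image f (Equiv.ofInjective e he) a
    simp only [Equiv.ofInjective_apply] at this
    rw [this, h1]
  · rw [extendDomain_apply_not_subtype _ _ hb, h2 b hb]

theorem ct_sum {α β : Type*} [Fintype α] [DecidableEq α] [Fintype β] [DecidableEq β]
    (f : Perm α) (g : Perm β) :
    Perm.cycleType (Equiv.sumCongr f g) = f.cycleType + g.cycleType := by
  have h : (Equiv.sumCongr f g : Perm (α ⊕ β)) = Perm.sumCongr f 1 * Perm.sumCongr 1 g := by
    rw [Perm.sumCongr_mul]; simp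
  rw [h, Perm.Disjoint.cycleType_mul]
  · congr 1
    · exact ct_of_inj _ _ Sum.inl Sum.inl_injective (by simp) (by rintro (a | b) <;> simp)
    · exact ct_of_inj _ _ Sum.inr Sum.inr_injective (by simp) (by rintro (a | b) <;> simp)
  · rintro (a | b) <;> simp

theorem ct_sigma {ι : Type*} {β : ι → Type*} [Fintype ι] [DecidableEq ι]
    [∀ i, Fintype (β i)] [∀ i, DecidableEq (β i)] (F : ∀ i, Perm (β i)) :
    Perm.cycleType (Equiv.sigmaCongrRight F) = ∑ i, (F i).cycleType := by
  have key : ∀ S : Finset ι,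
      (Perm.sigmaCongrRight (fun i => if i ∈ S then F i else 1)).cycleType
        = ∑ i ∈ S, (F i).cycleType := by
    intro S
    induction S using Finset.induction_on with
    | empty =>
      simp only [Finset.notMem_empty, if_false, Finset.sum_empty]
      rw [cycleType_eq_zero]
      rfl
    | insert i S hi ih =>
      have h : (Perm.sigmaCongrRight (fun k => if k ∈ insert i S then F k else 1))
          = Perm.sigmaCongrRight (Pi.mulSingle i (F i)) *
            Perm.sigmaCongrRight (fun k => if k ∈ S then F k else 1) := by
        rw [Perm.sigmaCongrRight_mul]
        congr 1
        funext k
        by_cases hk : k = i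
        · subst hk; simp [hi]
        · simp [hk]
      rw [h, Perm.Disjoint.cycleType_mul, ih, Finset.sum_insert hi]
      · congr 1
        refine ct_of_inj _ _ (Sigma.mk i) sigma_mk_injective (by simp) ?_
        rintro ⟨k, x⟩ hx
        have hk : k ≠ i := by
          rintro rfl; exact hx ⟨x, rfl⟩
        simp [hk]
      · rintro ⟨k, x⟩
        by_cases hk : k = i
        · subst hk; right; simp [hi]
        · left; simp [hk]
  have := key Finset.univ
  simpa using this

theorem rot_pow_apply {l : ℕ} [NeZero l] (k : ℕ) (x : Fin l) :
    (finRotate l ^ k) x = x + (Fin.ofNat l k) := by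
  induction k with
  | zero => ext; simp
  | succ k ih =>
    rw [pow_succ', Perm.mul_apply, ih, finRotate_apply]
    ext
    simp [Fin.val_add, Fin.ofNat, add_assoc]

theorem rot_pow_fix {l : ℕ} [NeZero l] (k : ℕ) (x : Fin l) :
    (finRotate l ^ k) x = x ↔ l ∣ k := by
  rw [rot_pow_apply, add_eq_left, Fin.ext_iff]
  simp [Fin.ofNat, Nat.dvd_iff_mod_eq_zero]

theorem rot_pow_eq_one {l : ℕ} [NeZero l] (k : ℕ) :
    finRotate l ^ k = 1 ↔ l ∣ k := by
  constructor
  · intro h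
    rw [← rot_pow_fix k (0 : Fin l), h]; rfl
  · intro h
    ext x
    rw [(rot_pow_fix k x).2 h]; rfl

theorem rot_mem {l : ℕ} [NeZero l] (k L : ℕ) (h : L ∈ (finRotate l ^ k).cycleType) :
    L = l / Nat.gcd l k := by
  have ho : orderOf (finRotate l ^ k) = l / Nat.gcd l k := by
    have : orderOf (finRotate l) = l := by
      apply Nat.dvd_antisymm
      · exact orderOf_dvd_of_pow_eq_one ((rot_pow_eq_one l).2 dvd_rfl)
      · exact (rot_pow_eq_one _).1 (pow_orderOf_eq_one _)
    rw [orderOf_pow, this]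
  rw [← ho]
  apply Nat.dvd_antisymm (dvd_of_mem_cycleType h)
  rw [cycleType_def, Multiset.mem_map] at h
  obtain ⟨c, hc, rfl⟩ := h
  rw [Finset.mem_val] at hc
  have hc' := mem_cycleFactorsFinset_iff.1 hc
  obtain ⟨x, hx⟩ := hc'.1.nonempty_support
  apply orderOf_dvd_of_pow_eq_one
  rw [← pow_mul, rot_pow_eq_one, ← rot_pow_fix _ x, pow_mul]
  have h3 : ∀ N : ℕ, ((finRotate l ^ k) ^ N) x = (c ^ N) x := by
    intro N
    rw [cycle_is_cycleOf hx hc]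
    simp
  simp only [Function.comp]
  rw [h3, ← hc'.1.orderOf, pow_orderOf_eq_one]; rfl

theorem rot_ct {l : ℕ} [NeZero l] (k : ℕ) (hk : ¬ l ∣ k) :
    (finRotate l ^ k).cycleType = Multiset.replicate (Nat.gcd l k) (l / Nat.gcd l k) := by
  have h1 : (finRotate l ^ k).cycleType =
      Multiset.replicate (Multiset.card (finRotate l ^ k).cycleType) (l / Nat.gcd l k) :=
    Multiset.eq_replicate.2 ⟨rfl, fun L hL => rot_mem k L hL⟩
  have h2 := sum_cycleType (finRotate l ^ k)
  have h3 : (finRotate l ^ k).support = Finset.univ := by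
    ext x; simp [rot_pow_fix, hk]
  rw [h3, h1, Multiset.sum_replicate, Finset.card_univ, Fintype.card_fin, smul_eq_mul] at h2
  rw [h1]
  congr 1
  have hl : 0 < l := Nat.pos_of_ne_zero (NeZero.ne l)
  have hd := Nat.gcd_dvd_left l k
  have hp : 0 < l / Nat.gcd l k := Nat.div_pos (Nat.le_of_dvd hl hd) (Nat.gcd_pos_of_pos_left _ hl)
  apply Nat.eq_of_mul_eq_mul_right hp
  rw [h2, Nat.mul_div_cancel' hd]

theorem rot_ct_congr {l : ℕ} [NeZero l] (k k' : ℕ) (h : Nat.gcd l k = Nat.gcd l k') :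
    (finRotate l ^ k).cycleType = (finRotate l ^ k').cycleType := by
  by_cases hk : l ∣ k
  · have hk' : l ∣ k' := by
      rw [← Nat.gcd_eq_left_iff_dvd] at *
      omega
    rw [(rot_pow_eq_one k).2 hk, (rot_pow_eq_one k').2 hk']
  · have hk' : ¬ l ∣ k' := by
      intro h'; apply hk
      rw [← Nat.gcd_eq_left_iff_dvd] at *
      omega
    rw [rot_ct k hk, rot_ct k' hk', h]

/-- general element -/
noncomputable def gen (n : ℕ) {m : ℕ} (idx : Fin m → Fin 3 → Fin n) (u : ℕ)
    (v : Fin m → Fin 6 → ℕ) : Equiv.Perm (Omega n idx) :=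
  Equiv.sumCongr
    (Equiv.sigmaCongrRight fun _i => finRotate _ ^ u)
    (Equiv.sigmaCongrRight fun j => Equiv.sigmaCongrRight fun d =>
      finRotate (r n idx j) ^ v j d)

theorem gen_mul (n : ℕ) {m : ℕ} (idx : Fin m → Fin 3 → Fin n) (u u' : ℕ)
    (v v' : Fin m → Fin 6 → ℕ) :
    gen n idx u v * gen n idx u' v' = gen n idx (u + u') (fun j d => v j d + v' j d) := by
  ext x
  rcases x with ⟨i, x⟩ | ⟨j, d, x⟩ <;> simp [gen, pow_add]

theorem gen_pow (n : ℕ) {m : ℕ} (idx : Fin m → Fin 3 → Fin n) (u : ℕ)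
    (v : Fin m → Fin 6 → ℕ) (N : ℕ) :
    gen n idx u v ^ N = gen n idx (u * N) (fun j d => v j d * N) := by
  induction N with
  | zero =>
    ext x
    rcases x with ⟨i, x⟩ | ⟨j, d, x⟩ <;> simp [gen]
  | succ N ih =>
    rw [pow_succ, ih, gen_mul]; rfl

theorem gen_ct (n : ℕ) {m : ℕ} (idx : Fin m → Fin 3 → Fin n) (u : ℕ)
    (v : Fin m → Fin 6 → ℕ) :
    (gen n idx u v).cycleType = ∑ i : Fin n, (finRotate (p i * p (n + i)) ^ u).cycleType
      + ∑ j, ∑ d, (finRotate (r n idx j) ^ v j d).cycleType := by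
  rw [gen, ct_sum, ct_sigma, ct_sigma]
  congr 1
  refine Finset.sum_congr rfl fun j _ => ?_
  exact ct_sigma _

theorem pi_eq (n : ℕ) {m : ℕ} (idx : Fin m → Fin 3 → Fin n) (s : Fin m → ℕ → ℕ) (t : Fin m → ℕ)
    (x1 x2 : ℕ) : pi1 n idx s ^ x1 * pi2 n idx t ^ x2 =
      gen n idx x1 (fun j d => s j d * x1 + t j * x2) := by
  have h1 : pi1 n idx s = gen n idx 1 (fun j d => s j d) := by simp [pi1, gen]
  have h2 : pi2 n idx t = gen n idx 0 (fun j _ => t j) := by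
    simp only [pi2, gen, pow_zero]; rfl
  rw [h1, h2, gen_pow, gen_pow, gen_mul]; simp

/-- exponents of rho -/
noncomputable def w (n : ℕ) {m : ℕ} (idx : Fin m → Fin 3 → Fin n) (j : Fin m) (d : Fin 6) : ℕ :=
  (![p (idx j 0) * p (idx j 1) * p (idx j 2),
           p (idx j 0), p (idx j 1), p (idx j 2), 1, 1] d)

theorem rho_eq (n : ℕ) {m : ℕ} (idx : Fin m → Fin 3 → Fin n) :
    rho n idx = gen n idx 1 (w n idx) := by
  simp [rho, gen, w]

theorem p_prime (i : ℕ) : (p i).Prime := Nat.prime_nth_prime _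
theorem q_prime (n j : ℕ) : (q n j).Prime := Nat.prime_nth_prime _
theorem nthp_dvd (a b : ℕ) :
    Nat.nth Nat.Prime a ∣ Nat.nth Nat.Prime b ↔ a = b := by
  rw [Nat.prime_dvd_prime_iff_eq (Nat.prime_nth_prime _) (Nat.prime_nth_prime _)]
  exact (Nat.nth_injective Nat.infinite_setOfPred_prime).eq_iff
theorem p_dvd (a b : ℕ) : p a ∣ p b ↔ a = b := by
  rw [p, p, nthp_dvd]; omega
theorem q_dvd (n a b : ℕ) : q n a ∣ q n b ↔ a = b := by
  rw [q, q, nthp_dvd]; omega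
theorem q_dvd_p (n a b : ℕ) (h : b < 2 * n) : ¬ q n a ∣ p b := by
  rw [q, p, nthp_dvd]; omega
theorem p_dvd_q (n a b : ℕ) (h : b < 2 * n) : ¬ p b ∣ q n a := by
  rw [q, p, nthp_dvd]; omega
theorem p_gt (i : ℕ) : 3 < p i := by
  have h1 : Nat.nth Nat.Prime 1 = 3 := Nat.nth_prime_one_eq_three
  rw [← h1]
  exact Nat.nth_strictMono Nat.infinite_setOfPred_prime (by omega)

instance pp_ne (a b : ℕ) : NeZero (p a * p b) :=
  ⟨Nat.mul_ne_zero (p_prime a).ne_zero (p_prime b).ne_zero⟩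
instance r_ne (n : ℕ) {m : ℕ} (idx : Fin m → Fin 3 → Fin n) (j : Fin m) : NeZero (r n idx j) :=
  ⟨Nat.mul_ne_zero (q_prime n j).ne_zero (Nat.mul_ne_zero (Nat.mul_ne_zero (p_prime _).ne_zero
    (p_prime _).ne_zero) (p_prime _).ne_zero)⟩

theorem gcd_prime_congr {a k k' : ℕ} (ha : a.Prime) (h : a ∣ k ↔ a ∣ k') :
    Nat.gcd k a = Nat.gcd k' a := by
  by_cases hk : a ∣ k
  · rw [Nat.gcd_eq_right hk, Nat.gcd_eq_right (h.1 hk)]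
  · have h1 := ((Nat.Prime.coprime_iff_not_dvd ha).2 hk).symm
    have h2 := ((Nat.Prime.coprime_iff_not_dvd ha).2 (fun hh => hk (h.2 hh))).symm
    rw [h1, h2]

theorem gcd_r_congr (n : ℕ) {m : ℕ} (idx : Fin m → Fin 3 → Fin n) (j : Fin m)
    (hidx : StrictMono (idx j)) (k k' : ℕ) (hq : q n j ∣ k ↔ q n j ∣ k')
    (hp : ∀ b, p (idx j b) ∣ k ↔ p (idx j b) ∣ k') :
    Nat.gcd (r n idx j) k = Nat.gcd (r n idx j) k' := by
  have hc : ∀ a b : Fin 3, a ≠ b → Nat.Coprime (p (idx j a)) (p (idx j b)) := by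
    intro a b hab
    rw [Nat.Prime.coprime_iff_not_dvd (p_prime _), p_dvd]
    intro h
    exact hab (hidx.injective (Fin.ext h))
  have hcq : ∀ a : Fin 3, Nat.Coprime (q n j) (p (idx j a)) := by
    intro a
    rw [Nat.Prime.coprime_iff_not_dvd (q_prime _ _)]
    exact q_dvd_p _ _ _ (by have := (idx j a).2; omega)
  have e : ∀ k, Nat.gcd (r n idx j) k = Nat.gcd k (q n j) * (Nat.gcd k (p (idx j 0)) *
      Nat.gcd k (p (idx j 1)) * Nat.gcd k (p (idx j 2))) := by
    intro k
    rw [Nat.gcd_comm, r, Nat.Coprime.gcd_mul, Nat.Coprime.gcd_mul, Nat.Coprime.gcd_mul]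
    · exact hc _ _ (by decide)
    · exact Nat.Coprime.mul_left (hc _ _ (by decide)) (hc _ _ (by decide))
    · exact Nat.Coprime.mul_right (Nat.Coprime.mul_right (hcq _) (hcq _)) (hcq _)
  rw [e, e, gcd_prime_congr (q_prime _ _) hq, gcd_prime_congr (p_prime _) (hp 0),
    gcd_prime_congr (p_prime _) (hp 1), gcd_prime_congr (p_prime _) (hp 2)]

theorem card_one_iff {n : ℕ} (f : Fin 3 → Fin n) (hf : Function.Injective f)
    (T : Finset (Fin n)) :
    (T ∩ {f 0, f 1, f 2}).card = 1 ↔ ∃ a, ∀ b, f b ∈ T ↔ b = a := by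
  have h : T ∩ {f 0, f 1, f 2} = (Finset.univ.filter (fun b => f b ∈ T)).image f := by
    ext x
    simp only [Finset.mem_inter, Finset.mem_insert, Finset.mem_singleton, Finset.mem_image,
      Finset.mem_filter, Finset.mem_univ, true_and, Fin.exists_fin_succ]
    constructor
    · rintro ⟨hx, rfl | rfl | rfl⟩ <;> simp [hx]
    · simp only [Fin.succ_zero_eq_one, Fin.succ_one_eq_two, IsEmpty.exists_iff, or_false]
      rintro (⟨hx, rfl⟩ | ⟨hx, rfl⟩ | ⟨hx, rfl⟩) <;> simp [hx]
  rw [h, Finset.card_image_of_injective _ hf, Finset.card_eq_one]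
  simp [Finset.ext_iff]

/-- residues -/
def ee (d : Fin 6) (b : Fin 3) : ℕ :=
  ![![1,0,0],![0,1,0],![0,0,1],![1,2,3],![3,1,2],![2,3,1]] d b

theorem ee_one (d : Fin 6) : ∃ a, ∀ b, ee d b = 1 ↔ b = a := by
  revert d; decide

theorem ee_lt (d : Fin 6) (b : Fin 3) : ee d b ≤ 3 := by
  revert d b; decide

theorem s_ee {f : ℕ → ℕ} {P : Fin 3 → ℕ}
    (hs1 : ∀ a b : Fin 3, (f a.val + if a = b then 1 else 0) % P b = 0)
    (hs2 : ∀ c b : Fin 3, (f (3 + c.val) + (1 + (3 + b.val - c.val) % 3)) % P b = 0)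
    (d : Fin 6) (b : Fin 3) : P b ∣ f d + ee d b := by
  have A : ∀ a b : Fin 3, P b ∣ f a.val + if a = b then 1 else 0 :=
    fun a b => Nat.dvd_of_mod_eq_zero (hs1 a b)
  have B : ∀ a b : Fin 3, P b ∣ f (3 + a.val) + (1 + (3 + b.val - a.val) % 3) :=
    fun a b => Nat.dvd_of_mod_eq_zero (hs2 a b)
  fin_cases d
  · have := A 0 b; fin_cases b <;> simpa [ee] using this
  · have := A 1 b; fin_cases b <;> simpa [ee] using this
  · have := A 2 b; fin_cases b <;> simpa [ee] using this
  · have := B 0 b; fin_cases b <;> simpa [ee] using this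
  · have := B 1 b; fin_cases b <;> simpa [ee] using this
  · have := B 2 b; fin_cases b <;> simpa [ee] using this

/-- key divisibility -/
theorem key_dvd {P s t e x1 x2 : ℕ} (hs : P ∣ s + e) (ht : t % P = 1) :
    P ∣ s * x1 + t * x2 ↔ (x2 : ZMod P) = e * x1 := by
  have h1 : (s : ZMod P) = - e := by
    rw [← ZMod.natCast_eq_zero_iff] at hs
    push_cast at hs
    exact eq_neg_of_add_eq_zero_left hs
  have h2 : (t : ZMod P) = 1 := by
    have := ZMod.natCast_mod t P
    rw [ht] at this
    simpa using this.symm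
  rw [← ZMod.natCast_eq_zero_iff]
  push_cast
  rw [h1, h2]
  constructor
  · intro h; linear_combination h
  · intro h; rw [h]; ring

theorem cast_eq {P a b : ℕ} (ha : a < P) (hb : b < P) : (a : ZMod P) = b ↔ a = b := by
  rw [ZMod.natCast_eq_natCast_iff', Nat.mod_eq_of_lt ha, Nat.mod_eq_of_lt hb]

theorem w_dvd (n : ℕ) {m : ℕ} (idx : Fin m → Fin 3 → Fin n) (j : Fin m)
    (hidx : StrictMono (idx j)) (d : Fin 6) (b : Fin 3) :
    p (idx j b) ∣ w n idx j d ↔ (d = 0 ∨ (d : ℕ) = b + 1) := by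
  have h : ∀ a, p (idx j b) ∣ p (idx j a) ↔ b = a := by
    intro a
    rw [p_dvd, ← Fin.ext_iff, hidx.injective.eq_iff]
  have h1 := (p_prime (idx j b)).one_lt.ne'
  fin_cases d
  · have : p (idx j b) ∣ p (idx j 0) * p (idx j 1) * p (idx j 2) := by
      rw [(p_prime _).dvd_mul, (p_prime _).dvd_mul, h, h, h]
      fin_cases b <;> simp
    simpa [w] using this
  all_goals
    simp [w, h, h1]
    try (fin_cases b <;> simp)

theorem q_not_dvd_w (n : ℕ) {m : ℕ} (idx : Fin m → Fin 3 → Fin n) (j : Fin m)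
    (d : Fin 6) : ¬ q n j ∣ w n idx j d := by
  have h : ∀ a, ¬ q n j ∣ p (idx j a) := by
    intro a
    exact q_dvd_p _ _ _ (by have := (idx j a).2; omega)
  have h1 := (q_prime n j).one_lt.ne'
  fin_cases d <;> simp [w, h, h1, (q_prime n j).dvd_mul]

theorem gen_mem (n : ℕ) {m : ℕ} (idx : Fin m → Fin 3 → Fin n) (u : ℕ)
    (v : Fin m → Fin 6 → ℕ) (L : ℕ) :
    L ∈ (gen n idx u v).cycleType ↔
      (∃ i : Fin n, L ∈ (finRotate (p i * p (n + i)) ^ u).cycleType) ∨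
      ∃ j d, L ∈ (finRotate (r n idx j) ^ v j d).cycleType := by
  rw [gen_ct, Multiset.mem_add]
  simp [Multiset.mem_sum]

theorem rot_mem_mul {l : ℕ} [NeZero l] (k L : ℕ) (h : L ∈ (finRotate l ^ k).cycleType) :
    L * Nat.gcd l k = l := by
  rw [rot_mem k L h, Nat.div_mul_cancel (Nat.gcd_dvd_left _ _)]

theorem rot_mem_of {l : ℕ} [NeZero l] (k L : ℕ) (hk : ¬ l ∣ k) (h : L * Nat.gcd l k = l) :
    L ∈ (finRotate l ^ k).cycleType := by
  have hl : 0 < l := Nat.pos_of_ne_zero (NeZero.ne l)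
  have hg : 0 < Nat.gcd l k := Nat.gcd_pos_of_pos_left _ hl
  rw [rot_ct k hk, Multiset.mem_replicate]
  exact ⟨hg.ne', (Nat.div_eq_of_eq_mul_left hg h.symm).symm⟩

theorem not_dvd_x1 (n : ℕ) {m : ℕ} (idx : Fin m → Fin 3 → Fin n) (u : ℕ)
    (v : Fin m → Fin 6 → ℕ) (h : (gen n idx u v).cycleType = (rho n idx).cycleType)
    (i : Fin n) : ¬ p i ∣ u := by
  have h1 : p i * p (n + i) ∈ (rho n idx).cycleType := by
    rw [rho_eq, gen_mem]
    left
    refine ⟨i, rot_mem_of _ _ ?_ (by simp)⟩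
    rw [Nat.dvd_one]
    intro h
    exact (p_prime i).one_lt.ne' (Nat.eq_one_of_mul_eq_one_right h)
  rw [← h, gen_mem] at h1
  have hi := i.2
  rcases h1 with ⟨k, hk⟩ | ⟨j, d, hk⟩
  · have hm := rot_mem_mul _ _ hk
    have hd : p (n + i) ∣ p k * p (n + k) := by
      rw [← hm]
      exact Dvd.dvd.mul_right (Dvd.intro_left _ rfl) _
    have hik : k = i := by
      rw [(p_prime _).dvd_mul, p_dvd, p_dvd] at hd
      have := k.2
      ext; omega
    subst hik
    have hg : Nat.gcd (p k * p (n + k)) u = 1 :=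
      Nat.eq_of_mul_eq_mul_left (Nat.pos_of_ne_zero (NeZero.ne (p k * p (n + k))))
        (by rw [hm, mul_one])
    intro hu
    have := Nat.dvd_gcd (Dvd.intro _ rfl : p k ∣ p k * p (n + k)) hu
    rw [hg, Nat.dvd_one] at this
    exact (p_prime k).one_lt.ne' this
  · exfalso
    have hm := rot_mem_mul _ _ hk
    have hd : p (n + i) ∣ r n idx j := by
      rw [← hm]
      exact Dvd.dvd.mul_right (Dvd.intro_left _ rfl) _
    rw [r, (p_prime _).dvd_mul, (p_prime _).dvd_mul, (p_prime _).dvd_mul, p_dvd, p_dvd, p_dvd] at hd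
    have h0 := (idx j 0).2
    have h1 := (idx j 1).2
    have h2 := (idx j 2).2
    rcases hd with hd | hd
    · exact p_dvd_q _ _ _ (by omega) hd
    · omega

theorem dead_comp (n : ℕ) {m : ℕ} (idx : Fin m → Fin 3 → Fin n) (u : ℕ)
    (v : Fin m → Fin 6 → ℕ) (h : (gen n idx u v).cycleType = (rho n idx).cycleType)
    (j : Fin m) : ∃ d, ∀ b, p (idx j b) ∣ v j d := by
  have h1 : q n j ∈ (rho n idx).cycleType := by
    rw [rho_eq, gen_mem]
    right
    refine ⟨j, 0, rot_mem_of _ _ ?_ ?_⟩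
    · intro hd
      exact q_not_dvd_w n idx j 0 ((Dvd.intro _ rfl : q n j ∣ r n idx j).trans hd)
    · have e : w n idx j 0 = p (idx j 0) * p (idx j 1) * p (idx j 2) := rfl
      rw [e, r, Nat.gcd_eq_right (Dvd.intro_left _ rfl)]
  rw [← h, gen_mem] at h1
  rcases h1 with ⟨k, hk⟩ | ⟨j', d, hk⟩
  · exfalso
    have hm := rot_mem_mul _ _ hk
    have hd : q n j ∣ p k * p (n + k) := Dvd.intro _ hm
    have := k.2
    rw [(q_prime _ _).dvd_mul] at hd
    rcases hd with hd | hd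
    · exact q_dvd_p _ _ _ (by omega) hd
    · exact q_dvd_p _ _ _ (by omega) hd
  · have hm := rot_mem_mul _ _ hk
    have hd : q n j ∣ r n idx j' := Dvd.intro _ hm
    have hj : j' = j := by
      have hh : ∀ a, ¬ q n j ∣ p (idx j' a) := by
        intro a
        exact q_dvd_p _ _ _ (by have := (idx j' a).2; omega)
      rw [r, (q_prime _ _).dvd_mul, (q_prime _ _).dvd_mul, (q_prime _ _).dvd_mul, q_dvd] at hd
      simp only [hh, or_false] at hd
      ext; omega
    subst hj
    refine ⟨d, ?_⟩
    have hg : Nat.gcd (r n idx j') (v j' d) = p (idx j' 0) * p (idx j' 1) * p (idx j' 2) := by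
      apply Nat.eq_of_mul_eq_mul_left (q_prime n j').pos
      rw [hm]; rfl
    have hv : p (idx j' 0) * p (idx j' 1) * p (idx j' 2) ∣ v j' d := by
      rw [← hg]; exact Nat.gcd_dvd_right _ _
    intro b
    refine Dvd.dvd.trans ?_ hv
    fin_cases b
    · exact Dvd.dvd.mul_right (Dvd.intro _ rfl) _
    · exact Dvd.dvd.mul_right (Dvd.intro_left _ rfl) _
    · exact Dvd.intro_left _ rfl

theorem clause_sum (n : ℕ) {m : ℕ} (idx : Fin m → Fin 3 → Fin n) (j : Fin m)
    (hidx : StrictMono (idx j)) (v : Fin 6 → ℕ) (hq : ∀ d, ¬ q n j ∣ v d) (a : Fin 3)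
    (hv : ∀ d b, p (idx j b) ∣ v d ↔ (if b = a then 1 else 0) = ee d b) :
    ∑ d, (finRotate (r n idx j) ^ v d).cycleType =
      ∑ d, (finRotate (r n idx j) ^ w n idx j d).cycleType := by
  have key : ∀ d d' : Fin 6, (∀ b : Fin 3, (if b = a then 1 else 0) = ee d b ↔
      (d' = 0 ∨ (d' : ℕ) = b + 1)) →
      (finRotate (r n idx j) ^ v d).cycleType = (finRotate (r n idx j) ^ w n idx j d').cycleType := by
    intro d d' h
    apply rot_ct_congr
    apply gcd_r_congr n idx j hidx
    · simp [hq, q_not_dvd_w]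
    · intro b
      rw [hv, w_dvd n idx j hidx, h]
  simp only [Fin.sum_univ_six]
  fin_cases a
  · rw [key 0 0 (by decide), key 1 3 (by decide), key 2 2 (by decide), key 3 1 (by decide),
      key 4 4 (by decide), key 5 5 (by decide)]
    abel
  · rw [key 1 0 (by decide), key 0 3 (by decide), key 2 1 (by decide), key 4 2 (by decide),
      key 3 4 (by decide), key 5 5 (by decide)]
    abel
  · rw [key 2 0 (by decide), key 0 2 (by decide), key 1 1 (by decide), key 5 3 (by decide),
      key 3 4 (by decide), key 4 5 (by decide)]
    abel

theorem exists_x2 (n : ℕ) (T : Finset (Fin n)) :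
    ∃ x : ℕ, ∀ i : Fin n, (x : ZMod (p i)) = ((if i ∈ T then 1 else 0 : ℕ) : ZMod (p i)) := by
  have hc : Set.Pairwise (Finset.univ : Finset (Fin n)) (Function.onFun Nat.Coprime (fun i : Fin n => p i)) := by
    intro a _ b _ hab
    simp only [Function.onFun]
    rw [Nat.Prime.coprime_iff_not_dvd (p_prime _), p_dvd]
    intro h
    exact hab (Fin.ext h)
  obtain ⟨x, hx⟩ := Nat.chineseRemainderOfFinset (fun i : Fin n => if i ∈ T then 1 else 0)
    (fun i : Fin n => p i) Finset.univ (fun i _ => (p_prime i).ne_zero) hc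
  exact ⟨x, fun i => (ZMod.natCast_eq_natCast_iff _ _ _).2 (hx i (Finset.mem_univ i))⟩

end aux

/-- There are `x_1, x_2` with `ct(π_1^{x_1} π_2^{x_2}) = ct(ρ)` if and only if there is a
subset `T ⊆ [n]` hitting every clause `C_j` in exactly one element. -/
theorem cycleType_eq_iff_exactHittingSet
    (n m : ℕ) (idx : Fin m → Fin 3 → Fin n) (hidx : ∀ j, StrictMono (idx j))
    (s : Fin m → ℕ → ℕ) (t : Fin m → ℕ)
    -- `s j d ∈ [0, r_j - 1]` for `d ∈ [6]` (here zero-indexed, `d ∈ {0,…,5}`)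
    (hslt : ∀ j : Fin m, ∀ d : ℕ, d < 6 → s j d < r n idx j)
    -- `s_{j,d} ≡ 1 (mod q_j)` for all `d ∈ [6]`
    (hsq : ∀ j : Fin m, ∀ d : ℕ, d < 6 → s j d % q n j = 1)
    -- for `a ∈ [3]`: `s_{j,a} ≡ -1 (mod p_{i_a})` and `s_{j,a} ≡ 0 (mod p_{i_b})` for `b ≠ a`
    (hs1 : ∀ j : Fin m, ∀ a b : Fin 3,
      (s j a.val + if a = b then 1 else 0) % p (idx j b) = 0)
    -- `(s_{j,4}, s_{j,5}, s_{j,6}) ≡ (-1,-3,-2) (mod p_{i_1})`, `(-2,-1,-3) (mod p_{i_2})`,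
    -- `(-3,-2,-1) (mod p_{i_3})`
    (hs2 : ∀ j : Fin m, ∀ c b : Fin 3,
      (s j (3 + c.val) + (1 + (3 + b.val - c.val) % 3)) % p (idx j b) = 0)
    -- `t_j ∈ [0, r_j - 1]`, `t_j ≡ 1 (mod p_{i_a})` for `a ∈ [3]`, `t_j ≡ 0 (mod q_j)`
    (htlt : ∀ j : Fin m, t j < r n idx j)
    (htp : ∀ j : Fin m, ∀ a : Fin 3, t j % p (idx j a) = 1)
    (htq : ∀ j : Fin m, t j % q n j = 0) :
    (∃ x1 x2 : ℕ,
        (pi1 n idx s ^ x1 * pi2 n idx t ^ x2).cycleType = (rho n idx).cycleType) ↔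
      ∃ T : Finset (Fin n),
        ∀ j : Fin m, (T ∩ {idx j 0, idx j 1, idx j 2}).card = 1 := by
  constructor
  · rintro ⟨x1, x2, h⟩
    rw [pi_eq] at h
    refine ⟨Finset.univ.filter (fun i : Fin n => (x2 : ZMod (p i)) = x1), fun j => ?_⟩
    rw [card_one_iff _ (hidx j).injective]
    obtain ⟨d, hd⟩ := dead_comp n idx _ _ h j
    obtain ⟨a, ha⟩ := ee_one d
    refine ⟨a, fun b => ?_⟩
    rw [← ha b]
    have hb := hd b
    rw [key_dvd (s_ee (P := fun b => p (idx j b)) (hs1 j) (hs2 j) d b) (htp j b)] at hb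
    have hx := not_dvd_x1 n idx _ _ h (idx j b)
    haveI : Fact (p (idx j b)).Prime := ⟨p_prime _⟩
    have hx' : (x1 : ZMod (p (idx j b))) ≠ 0 := by
      rwa [Ne, ZMod.natCast_eq_zero_iff]
    have hgt := p_gt (idx j b)
    have hle := ee_lt d b
    rw [← cast_eq (P := p (idx j b)) (by omega) (by omega)]
    simp only [Finset.mem_filter, Finset.mem_univ, true_and]
    rw [hb]
    constructor
    · intro h
      apply mul_right_cancel₀ hx'
      rw [h]; simp
    · intro h
      rw [h]; simp
  · rintro ⟨T, hT⟩
    obtain ⟨x, hx⟩ := exists_x2 n T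
    refine ⟨1, x, ?_⟩
    rw [pi_eq, rho_eq, gen_ct, gen_ct]
    congr 1
    refine Finset.sum_congr rfl fun j _ => ?_
    obtain ⟨a, ha⟩ := (card_one_iff _ (hidx j).injective T).1 (hT j)
    apply clause_sum n idx j (hidx j) _ _ a
    · intro d b
      rw [key_dvd (s_ee (P := fun b => p (idx j b)) (hs1 j) (hs2 j) d b) (htp j b), hx]
      have hgt := p_gt (idx j b)
      have hle := ee_lt d b
      simp only [ha b]
      rw [Nat.cast_one, mul_one, cast_eq (by split_ifs <;> omega) (by omega)]
    · intro d hd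
      have h1 := hsq j d d.2
      have h2 : q n j ∣ t j * x := Dvd.dvd.mul_right (Nat.dvd_of_mod_eq_zero (htq j)) _
      rw [mul_one] at hd
      have h3 := (Nat.dvd_add_left h2).1 hd
      have := Nat.mod_eq_zero_of_dvd h3
      omega

end HittingSet
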